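/- Suppose the Stochastic Dynamical System generated by μ satisfies conditions (R) and (U). Then for every ergodic invariant Radon measure ν, its support supp ν is either minimal among nonempty closed Γ-invariant sets (i.e., supp ν contains no nonempty closed Γ-invariant set other than itself), or supp ν contains a nonempty Γ-invariant set that is discrete in ℝ (all of its points are isolated). -/

import Mathlib

open MeasureTheory Filter Set Function Topology
open scoped ENNReal NNReal

section SDS

variable {ι : Type*}

/-- An orientation-preserving homeomorphism of `ℝ`, modeled as a strictly increasing
surjection (such a map is automatically a homeomorphism of `ℝ`). -/
def IsOPH (g : ℝ → ℝ) : Prop := StrictMono g ∧ Function.Surjective g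

/-- The Markov chain `X_n^x = g_{ω (n-1)} ∘ ⋯ ∘ g_{ω 0} (x)` driven by the sequence `ω`. -/
def chain (G : ι → ℝ → ℝ) (ω : ℕ → ι) (x : ℝ) : ℕ → ℝ
  | 0 => x
  | n + 1 => G (ω n) (chain G ω x n)

/-- Composition `G l₀ ∘ G l₁ ∘ ⋯` along a list `l`. -/
def comps (G : ι → ℝ → ℝ) (l : List ι) : ℝ → ℝ := l.foldr (fun i f => G i ∘ f) id

/-- The semigroup `Γ*` generated by the maps `G i` under composition. -/
def sgen (G : ι → ℝ → ℝ) : Set (ℝ → ℝ) := {f | ∃ l : List ι, l ≠ [] ∧ f = comps G l}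

variable [MeasurableSpace ι]

/-- `Q` is the product measure `μm^{⊗ℕ}` on `ι^ℕ` (for a discrete base measure `μm`
this property characterizes the product measure). -/
def IsProd (μm : Measure ι) (Q : Measure (ℕ → ι)) : Prop :=
  ∀ (n : ℕ) (c : ℕ → ι),
    Q {ω : ℕ → ι | ∀ k < n, ω k = c k} = ∏ k ∈ Finset.range n, μm {c k}

/-- A Radon measure on `ℝ`: a Borel measure which is finite on compact sets. -/
def IsRadon (ν : Measure ℝ) : Prop := ∀ K : Set ℝ, IsCompact K → ν K < ⊤

/-- Invariance of `ν` for the system generated by the discrete measure `μm` on the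
maps `G i`:  `∫ f dν = Σ_g μ(g) ∫ f(g x) dν(x)` for every continuous compactly
supported `f`. -/
def IsInv (G : ι → ℝ → ℝ) (μm : Measure ι) (ν : Measure ℝ) : Prop :=
  ∀ f : ℝ → ℝ, Continuous f → HasCompactSupport f →
    ∫ x, f x ∂ν = ∑' i : ι, (μm {i}).toReal * ∫ x, f (G i x) ∂ν

/-- Ergodicity: `ν` is invariant and any Borel set whose restriction is again invariant
is either null or conull. -/
def IsErg (G : ι → ℝ → ℝ) (μm : Measure ι) (ν : Measure ℝ) : Prop :=
  IsInv G μm ν ∧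
    ∀ A : Set ℝ, MeasurableSet A → IsInv G μm (ν.restrict A) → ν A = 0 ∨ ν Aᶜ = 0

/-- The support of a measure: points all of whose open neighbourhoods have positive
measure. -/
def msupp (ν : Measure ℝ) : Set ℝ := {x | ∀ U : Set ℝ, IsOpen U → x ∈ U → 0 < ν U}

/-- Condition (R): there is a compact interval visited infinitely often, a.s., from any
starting point. -/
def CondR (G : ι → ℝ → ℝ) (Q : Measure (ℕ → ι)) : Prop :=
  ∃ a b : ℝ, a ≤ b ∧ ∀ x : ℝ, ∀ᵐ ω ∂Q, ∃ᶠ n in atTop, chain G ω x n ∈ Icc a b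

/-- Condition (C): there is an interval `I` such that any compact set can be mapped
into `I` by an element of the semigroup `Γ*`. -/
def CondC (G : ι → ℝ → ℝ) : Prop :=
  ∃ a b : ℝ, ∀ K : Set ℝ, IsCompact K → ∃ g ∈ sgen G, g '' K ⊆ Icc a b

/-- Condition (U): from any point one can move both up and down. -/
def CondU (G : ι → ℝ → ℝ) : Prop :=
  ∀ x : ℝ, ∃ i j : ι, G i x < x ∧ x < G j x

end SDS

section Aux

variable {ι : Type*}

/-- Transition operator on functions with weights `q`. -/
noncomputable def Pop (G : ι → ℝ → ℝ) (q : ι → ℝ≥0∞) (f : ℝ → ℝ≥0∞) : ℝ → ℝ≥0∞ :=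
  fun x => ∑' i, q i * f (G i x)

/-- Transition operator on measures with weights `q`. -/
noncomputable def Top' (G : ι → ℝ → ℝ) (q : ι → ℝ≥0∞) (m : Measure ℝ) : Measure ℝ :=
  Measure.sum fun i => q i • m.map (G i)

lemma Top'_apply {G : ι → ℝ → ℝ} (hm : ∀ i, Measurable (G i)) (q : ι → ℝ≥0∞) (m : Measure ℝ)
    {E : Set ℝ} (hE : MeasurableSet E) :
    Top' G q m E = ∑' i, q i * m (G i ⁻¹' E) := by
  unfold Top'
  rw [Measure.sum_apply _ hE]
  refine tsum_congr fun i => ?_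
  rw [Measure.smul_apply, Measure.map_apply (hm i) hE, smul_eq_mul]

lemma lintegral_Top' {G : ι → ℝ → ℝ} [Countable ι] (hm : ∀ i, Measurable (G i)) (q : ι → ℝ≥0∞)
    (m : Measure ℝ) {f : ℝ → ℝ≥0∞} (hf : Measurable f) :
    ∫⁻ x, f x ∂(Top' G q m) = ∫⁻ x, Pop G q f x ∂m := by
  unfold Top' Pop
  rw [lintegral_sum_measure, lintegral_tsum]
  · refine tsum_congr fun i => ?_
    rw [lintegral_smul_measure, lintegral_map hf (hm i)]
    exact (lintegral_const_mul _ (hf.comp (hm i))).symm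
  · intro i
    exact ((hf.comp (hm i)).const_mul _).aemeasurable

lemma measurable_Pop {G : ι → ℝ → ℝ} [Countable ι] (hm : ∀ i, Measurable (G i)) (q : ι → ℝ≥0∞)
    {f : ℝ → ℝ≥0∞} (hf : Measurable f) : Measurable (Pop G q f) := by
  unfold Pop
  exact Measurable.tsum fun i => (hf.comp (hm i)).const_mul _

lemma measurable_Pop_iter {G : ι → ℝ → ℝ} [Countable ι] (hm : ∀ i, Measurable (G i))
    (q : ι → ℝ≥0∞) (k : ℕ)
    {f : ℝ → ℝ≥0∞} (hf : Measurable f) : Measurable ((Pop G q)^[k] f) := by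
  induction k with
  | zero => exact hf
  | succ k ih => rw [Function.iterate_succ_apply']; exact measurable_Pop hm q ih

lemma lintegral_Top'_iter {G : ι → ℝ → ℝ} [Countable ι] (hm : ∀ i, Measurable (G i))
    (q : ι → ℝ≥0∞) (k : ℕ)
    (m : Measure ℝ) {f : ℝ → ℝ≥0∞} (hf : Measurable f) :
    ∫⁻ x, f x ∂((Top' G q)^[k] m) = ∫⁻ x, (Pop G q)^[k] f x ∂m := by
  induction k generalizing m with
  | zero => rfl
  | succ k ih =>
    rw [Function.iterate_succ_apply, ih, Function.iterate_succ_apply',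
      lintegral_Top' hm q m (measurable_Pop_iter hm q k hf)]

lemma Top'_add {G : ι → ℝ → ℝ} (hm : ∀ i, Measurable (G i)) (q : ι → ℝ≥0∞)
    (m m' : Measure ℝ) : Top' G q (m + m') = Top' G q m + Top' G q m' := by
  ext E hE
  rw [Measure.add_apply, Top'_apply hm q _ hE, Top'_apply hm q _ hE, Top'_apply hm q _ hE,
    ← ENNReal.tsum_add]
  refine tsum_congr fun i => ?_
  rw [Measure.add_apply, mul_add]

lemma Top'_mono {G : ι → ℝ → ℝ} (hm : ∀ i, Measurable (G i)) (q : ι → ℝ≥0∞)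
    {m m' : Measure ℝ} (h : m ≤ m') : Top' G q m ≤ Top' G q m' := by
  refine Measure.le_iff.2 fun E hE => ?_
  rw [Top'_apply hm q _ hE, Top'_apply hm q _ hE]
  exact ENNReal.tsum_le_tsum fun i => mul_le_mul_right (h _) _

lemma Top'_sum {G : ι → ℝ → ℝ} (hm : ∀ i, Measurable (G i)) (q : ι → ℝ≥0∞)
    (m : ℕ → Measure ℝ) : Top' G q (Measure.sum m) = Measure.sum fun n => Top' G q (m n) := by
  ext E hE
  rw [Measure.sum_apply _ hE, Top'_apply hm q _ hE]
  simp_rw [Top'_apply hm q _ hE]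
  rw [ENNReal.tsum_comm]
  refine tsum_congr fun i => ?_
  rw [Measure.sum_apply _ (hm i hE), ENNReal.tsum_mul_left]

/-- Difference of measures. -/
lemma exists_add_of_le' {m m' : Measure ℝ} [SigmaFinite m] (h : m' ≤ m) :
    ∃ d, m = m' + d := by
  have : SigmaFinite m' := by
    refine ⟨⟨⟨spanningSets m, fun _ => trivial, fun n => ?_, iUnion_spanningSets m⟩⟩⟩
    exact (h _).trans_lt (measure_spanningSets_lt_top m n)
  have hac : m' ≪ m := Measure.absolutelyContinuous_of_le h
  have h1 := Measure.rnDeriv_le_one_of_le h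
  have h2 := Measure.withDensity_rnDeriv_eq m' m hac
  have hmeas := Measure.measurable_rnDeriv m' m
  refine ⟨m.withDensity (fun x => 1 - m'.rnDeriv m x), ?_⟩
  have : (m'.rnDeriv m + fun x => 1 - m'.rnDeriv m x) =ᵐ[m] 1 := by
    filter_upwards [h1] with x hx
    simp only [Pi.add_apply, Pi.one_apply] at hx ⊢
    exact add_tsub_cancel_of_le hx
  have h4 : m.withDensity (m'.rnDeriv m) + m.withDensity (fun x => 1 - m'.rnDeriv m x) = m := by
    rw [← withDensity_add_left hmeas, withDensity_congr_ae this, withDensity_one]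
  rw [h2] at h4
  exact h4.symm

/-- Conservativity: a subinvariant measure is invariant. -/
lemma conserv {G : ι → ℝ → ℝ} [Countable ι] (hm : ∀ i, Measurable (G i)) (q : ι → ℝ≥0∞)
    {I : Set ℝ} (hI : MeasurableSet I)
    (hrec : ∀ x, ∑' k, (Pop G q)^[k] (I.indicator 1) x = ⊤)
    (m : Measure ℝ) [SigmaFinite m] (hmI : m I < ⊤) (hle : Top' G q m ≤ m) :
    Top' G q m = m := by
  obtain ⟨d, hd⟩ := exists_add_of_le' hle
  have hmono : Measurable (I.indicator (1 : ℝ → ℝ≥0∞)) := measurable_one.indicator hI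
  have key : ∀ n, (Top' G q)^[n] m I + ∑ k ∈ Finset.range n, (Top' G q)^[k] d I = m I := by
    intro n
    induction n with
    | zero => simp
    | succ n ih =>
      rw [Finset.sum_range_succ, ← ih]
      have hadd : ∀ k (a b : Measure ℝ), (Top' G q)^[k] (a + b) =
          (Top' G q)^[k] a + (Top' G q)^[k] b := by
        intro k
        induction k with
        | zero => intro a b; rfl
        | succ k ih => intro a b; simp only [Function.iterate_succ_apply, Top'_add hm, ih]
      have : (Top' G q)^[n] m = (Top' G q)^[n+1] m + (Top' G q)^[n] d := by
        conv_lhs => rw [hd, hadd]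
        rw [Function.iterate_succ_apply]
      conv_rhs => rw [this, Measure.add_apply]
      ring
  have hsum : ∑' k, (Top' G q)^[k] d I ≤ m I := by
    rw [ENNReal.tsum_eq_iSup_nat]
    exact iSup_le fun n => (key n) ▸ le_add_self
  have h3 : ∑' k, (Top' G q)^[k] d I = ⊤ * d univ := by
    have : ∀ k, (Top' G q)^[k] d I = ∫⁻ x, (Pop G q)^[k] (I.indicator 1) x ∂d := by
      intro k
      rw [← lintegral_Top'_iter hm q k d hmono, lintegral_indicator_one hI]
    simp_rw [this]
    rw [← lintegral_tsum fun k => (measurable_Pop_iter hm q k hmono).aemeasurable]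
    simp_rw [hrec]
    rw [lintegral_const]
  have hd0 : d = 0 := by
    by_contra hne
    have : d univ ≠ 0 := fun h => hne (Measure.measure_univ_eq_zero.1 h)
    rw [h3, ENNReal.top_mul this] at hsum
    exact absurd hmI (not_lt.2 hsum)
  rw [hd0, add_zero] at hd
  exact hd.symm

lemma sigmaFinite_of_le' {m m' : Measure ℝ} [SigmaFinite m] (h : m' ≤ m) : SigmaFinite m' := by
  refine ⟨⟨⟨spanningSets m, fun _ => trivial, fun n => ?_, iUnion_spanningSets m⟩⟩⟩
  exact (h _).trans_lt (measure_spanningSets_lt_top m n)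

lemma restrict_inv {G : ι → ℝ → ℝ} [Countable ι] (hm : ∀ i, Measurable (G i)) (q : ι → ℝ≥0∞)
    {I : Set ℝ} (hI : MeasurableSet I)
    (hrec : ∀ x, ∑' k, (Pop G q)^[k] (I.indicator 1) x = ⊤)
    (m : Measure ℝ) [SigmaFinite m] (hmI : m I < ⊤) (hinv : Top' G q m = m)
    {A : Set ℝ} (hA : MeasurableSet A) (habs : ∀ i, m (A ∩ G i ⁻¹' Aᶜ) = 0) :
    Top' G q (m.restrict A) = m.restrict A := by
  refine conserv hm q hI hrec _ ((Measure.restrict_le_self _).trans_lt hmI) ?_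
  refine Measure.le_iff.2 fun E hE => ?_
  rw [Top'_apply hm q _ hE, Measure.restrict_apply hE]
  conv_rhs => rw [← hinv, Top'_apply hm q _ (hE.inter hA)]
  refine ENNReal.tsum_le_tsum fun i => mul_le_mul_right ?_ _
  rw [Measure.restrict_apply (hm i hE)]
  calc m (G i ⁻¹' E ∩ A) ≤ m (G i ⁻¹' (E ∩ A) ∪ (A ∩ G i ⁻¹' Aᶜ)) := by
        refine measure_mono ?_
        rintro x ⟨hx, hxA⟩
        by_cases h : G i x ∈ A
        · exact Or.inl ⟨hx, h⟩
        · exact Or.inr ⟨hxA, h⟩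
    _ ≤ m (G i ⁻¹' (E ∩ A)) + m (A ∩ G i ⁻¹' Aᶜ) := measure_union_le _ _
    _ = _ := by rw [habs i, add_zero]

end Aux

section Rec

variable {ι : Type*}

lemma chain_shift (G : ι → ℝ → ℝ) (ω : ℕ → ι) (x : ℝ) (k : ℕ) :
    chain G ω x (k + 1) = chain G (fun j => ω (j + 1)) (G (ω 0) x) k := by
  induction k with
  | zero => rfl
  | succ k ih =>
    rw [show chain G ω x (k + 1 + 1) = G (ω (k + 1)) (chain G ω x (k + 1)) from rfl, ih]
    rfl

open Classical in
lemma cyl_bound [Countable ι] [MeasurableSpace ι] (G : ι → ℝ → ℝ) (μm : Measure ι)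
    (Q : Measure (ℕ → ι)) (hQ : IsProd μm Q) (s : Set ι) (I : Set ℝ) (k : ℕ) :
    ∀ (n : ℕ) (c : ℕ → ι) (x : ℝ),
    Q {ω | (∀ j < n, ω j = c j) ∧ (∀ j, ω j ∈ s) ∧ chain G (fun j => ω (j + n)) x k ∈ I} ≤
      (∏ j ∈ Finset.range n, μm {c j}) *
        (Pop G (fun i => if i ∈ s then μm {i} else 0))^[k] (I.indicator 1) x := by
  induction k with
  | zero =>
    intro n c x
    rw [← hQ n c]
    by_cases hx : x ∈ I
    · simp only [Function.iterate_zero, id, Set.indicator_of_mem hx, Pi.one_apply, mul_one]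
      exact measure_mono fun ω h => h.1
    · have : {ω : ℕ → ι | (∀ j < n, ω j = c j) ∧ (∀ j, ω j ∈ s) ∧
          chain G (fun j => ω (j + n)) x 0 ∈ I} = ∅ := by
        ext ω
        simp only [mem_ofPred_eq, mem_empty_iff_false, iff_false]
        rintro ⟨_, _, h⟩
        exact hx h
      rw [this]; simp
  | succ k ih =>
    intro n c x
    rw [Function.iterate_succ_apply']
    have hsub : {ω : ℕ → ι | (∀ j < n, ω j = c j) ∧ (∀ j, ω j ∈ s) ∧
          chain G (fun j => ω (j + n)) x (k + 1) ∈ I} ⊆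
        ⋃ i : ι, {ω : ℕ → ι | i ∈ s ∧ (∀ j < n + 1, ω j = Function.update c n i j) ∧
          (∀ j, ω j ∈ s) ∧ chain G (fun j => ω (j + (n + 1))) (G i x) k ∈ I} := by
      rintro ω ⟨h1, h2, h3⟩
      refine mem_iUnion.2 ⟨ω n, h2 n, ?_, h2, ?_⟩
      · intro j hj
        rcases Nat.lt_succ_iff_lt_or_eq.1 hj with h | h
        · rw [Function.update_of_ne h.ne]; exact h1 j h
        · subst h; simp
      · rw [chain_shift] at h3
        simp only [zero_add] at h3
        have : (fun j => ω (j + (n + 1))) = fun j => ω (j + 1 + n) := by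
          funext j; congr 1; omega
        rw [this]; exact h3
    refine (measure_mono hsub).trans ((measure_iUnion_le _).trans ?_)
    unfold Pop
    rw [← ENNReal.tsum_mul_left]
    refine ENNReal.tsum_le_tsum fun i => ?_
    by_cases hi : i ∈ s
    · simp only [hi, true_and, if_true]
      refine (ih (n + 1) (Function.update c n i) (G i x)).trans (le_of_eq ?_)
      rw [Finset.prod_range_succ]
      have : ∏ j ∈ Finset.range n, μm {Function.update c n i j} =
          ∏ j ∈ Finset.range n, μm {c j} := by
        refine Finset.prod_congr rfl fun j hj => ?_
        rw [Function.update_of_ne (Finset.mem_range.1 hj).ne]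
      rw [this, Function.update_self, mul_assoc]
      rfl
    · simp [hi]

open Classical in
lemma rec_of_condR [Countable ι] [MeasurableSpace ι] (G : ι → ℝ → ℝ) (μm : Measure ι)
    (Q : Measure (ℕ → ι)) (hQ : IsProd μm Q) (s : Set ι) (hs : Q {ω | ∀ j, ω j ∈ s} ≠ 0)
    {a b : ℝ} (hR : ∀ x : ℝ, ∀ᵐ ω ∂Q, ∃ᶠ n in atTop, chain G ω x n ∈ Icc a b) (x : ℝ) :
    ∑' k, (Pop G (fun i => if i ∈ s then μm {i} else 0))^[k] ((Icc a b).indicator 1) x = ⊤ := by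
  by_contra hne
  obtain ⟨ω₀, -⟩ : {ω : ℕ → ι | ∀ j, ω j ∈ s}.Nonempty := by
    rw [nonempty_iff_ne_empty]; rintro h; rw [h] at hs; simp at hs
  have hb : ∀ k, Q {ω | (∀ j, ω j ∈ s) ∧ chain G ω x k ∈ Icc a b} ≤
      (Pop G (fun i => if i ∈ s then μm {i} else 0))^[k] ((Icc a b).indicator 1) x := by
    intro k
    have := cyl_bound G μm Q hQ s (Icc a b) k 0 ω₀ x
    simpa using this
  have h0 := measure_limsup_atTop_eq_zero (μ := Q)
    (s := fun k => {ω | (∀ j, ω j ∈ s) ∧ chain G ω x k ∈ Icc a b})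
    (ne_top_of_le_ne_top hne (ENNReal.tsum_le_tsum hb))
  have h1 := hR x
  rw [ae_iff] at h1
  apply hs
  refine measure_mono_null ?_ (measure_union_null h0 h1)
  intro ω hω
  by_cases h : ∃ᶠ n in atTop, chain G ω x n ∈ Icc a b
  · left
    rw [mem_limsup_iff_frequently_mem]
    exact h.mono fun n hn => ⟨hω, hn⟩
  · right; exact h

/-- transversal of atoms -/
lemma exists_transversal [Countable ι] [MeasurableSpace ι] (μm : Measure ι)
    [IsProbabilityMeasure μm] (Q : Measure (ℕ → ι)) (hQ0 : Q univ ≠ 0) :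
    ∃ s : Set ι, Q {ω | ∀ j, ω j ∈ s} ≠ 0 ∧ ∑' i : s, μm {(i : ι)} ≤ 1 := by
  let S : Setoid ι := ⟨fun i j => ∀ E : Set ι, MeasurableSet E → (i ∈ E ↔ j ∈ E),
    ⟨fun _ _ _ => Iff.rfl, fun h E hE => (h E hE).symm, fun h h' E hE => (h E hE).trans (h' E hE)⟩⟩
  let r : ι → ι := fun i => (Quotient.mk S i).out
  have hr : ∀ i (E : Set ι), MeasurableSet E → (r i ∈ E ↔ i ∈ E) := by
    intro i
    exact Quotient.exact (s := S) (Quotient.out_eq (Quotient.mk S i))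
  have hrr : ∀ i, r (r i) = r i := by
    intro i
    simp only [r, Quotient.out_eq]
  have hatom : ∀ i, MeasurableSet {j | S i j} := by
    intro i
    have : ∀ j : ι, ∃ E : Set ι, MeasurableSet E ∧ i ∈ E ∧ (¬ S i j → j ∉ E) := by
      intro j
      by_cases h : S i j
      · exact ⟨univ, MeasurableSet.univ, trivial, fun h' => absurd h h'⟩
      · have h' : ∃ E : Set ι, MeasurableSet E ∧ ¬ (i ∈ E ↔ j ∈ E) := by
          by_contra hc
          push Not at hc
          exact h hc
        obtain ⟨E, hE, hij⟩ := h'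
        by_cases hi : i ∈ E
        · exact ⟨E, hE, hi, fun _ hj => hij ⟨fun _ => hj, fun _ => hi⟩⟩
        · refine ⟨Eᶜ, hE.compl, hi, fun _ hj => hij ⟨fun h => absurd h hi, fun h => absurd h hj⟩⟩
    choose E hE hi hj using this
    have : {j | S i j} = ⋂ j, E j := by
      ext k
      simp only [mem_ofPred_eq, mem_iInter]
      constructor
      · intro h j
        exact (h (E j) (hE j)).1 (hi j)
      · intro h
        by_contra hk
        exact hj k hk (h k)
    rw [this]
    exact MeasurableSet.iInter hE
  refine ⟨range r, ?_, ?_⟩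
  · intro h0
    obtain ⟨A, hsub, hA, hA0⟩ := exists_measurable_superset_of_null h0
    have hsat : ∀ A : Set (ℕ → ι), MeasurableSet A → ∀ ω : ℕ → ι, (fun j => r (ω j)) ∈ A ↔ ω ∈ A := by
      let m' : MeasurableSpace (ℕ → ι) :=
        { MeasurableSet' := fun A => ∀ ω : ℕ → ι, (fun j => r (ω j)) ∈ A ↔ ω ∈ A
          measurableSet_empty := fun _ => Iff.rfl
          measurableSet_compl := fun A h ω => not_congr (h ω)
          measurableSet_iUnion := fun f h ω => by
            simp only [mem_iUnion]
            exact exists_congr fun n => h n ω }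
      have hle : (MeasurableSpace.pi : MeasurableSpace (ℕ → ι)) ≤ m' := by
        refine iSup_le fun j => ?_
        rintro _ ⟨E, hE, rfl⟩ ω
        exact hr (ω j) E hE
      exact fun A hA => hle A hA
    apply hQ0
    refine measure_mono_null ?_ hA0
    intro ω _
    rw [← hsat A hA]
    exact hsub fun j => mem_range_self _
  · calc ∑' i : range r, μm {(i : ι)} ≤ ∑' i : range r, μm {j | S i j} := by
          refine ENNReal.tsum_le_tsum fun i => measure_mono ?_
          rintro _ rfl
          exact S.refl _
      _ ≤ μm univ := by
          refine tsum_measure_le_measure_univ (fun i => (hatom i).nullMeasurableSet) ?_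
          rintro ⟨_, i, rfl⟩ ⟨_, i', rfl⟩ hne
          refine Disjoint.aedisjoint ?_
          rw [Set.disjoint_left]
          intro j h1 h2
          apply hne
          have : S (r i) (r i') := S.trans h1 (S.symm h2)
          have h3 : Quotient.mk S (r i) = Quotient.mk S (r i') := Quotient.sound this
          have : r (r i) = r (r i') := by
            simp only [r] at h3 ⊢; rw [h3]
          rw [hrr, hrr] at this
          exact Subtype.ext this
      _ = 1 := measure_univ

end Rec

section Inv

variable {ι : Type*}

lemma IsOPH.cont {g : ℝ → ℝ} (h : IsOPH g) : Continuous g :=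
  h.1.monotone.continuous_of_surjective h.2

lemma isOPH_compactSupport {g f : ℝ → ℝ} (h : IsOPH g) (hf : HasCompactSupport f) :
    HasCompactSupport (fun x => f (g x)) := by
  let e : ℝ ≃ₜ ℝ := (StrictMono.orderIsoOfSurjective g h.1 h.2).toHomeomorph
  exact hf.comp_homeomorph e

lemma integral_Top' {G : ι → ℝ → ℝ} [Countable ι] (hG : ∀ i, IsOPH (G i)) (p : ι → ℝ≥0∞)
    (m : Measure ℝ) [IsFiniteMeasureOnCompacts (Top' G p m)] {f : ℝ → ℝ} (hf : Continuous f)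
    (hc : HasCompactSupport f) :
    ∫ x, f x ∂(Top' G p m) = ∑' i, (p i).toReal * ∫ x, f (G i x) ∂m := by
  have hint : Integrable f (Top' G p m) := hf.integrable_of_hasCompactSupport hc
  have := hasSum_integral_measure hint
  have h2 := this.tsum_eq
  unfold Top'
  rw [← h2]
  refine tsum_congr fun i => ?_
  rw [integral_smul_measure, integral_map (hG i).cont.measurable.aemeasurable
    hf.aestronglyMeasurable, smul_eq_mul]

lemma isInv_of_Top' {G : ι → ℝ → ℝ} [Countable ι] [MeasurableSpace ι] (hG : ∀ i, IsOPH (G i))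
    (μm : Measure ι) (m : Measure ℝ) [IsFiniteMeasureOnCompacts m]
    (h : Top' G (fun i => μm {i}) m = m) : IsInv G μm m := by
  intro f hf hc
  have : IsFiniteMeasureOnCompacts (Top' G (fun i => μm {i}) m) := by rw [h]; infer_instance
  have h2 := integral_Top' hG (fun i => μm {i}) m hf hc
  rw [h] at h2
  exact h2

lemma Top'_of_isInv {G : ι → ℝ → ℝ} [Countable ι] [MeasurableSpace ι] (hG : ∀ i, IsOPH (G i))
    (μm : Measure ι) [IsProbabilityMeasure μm] (m : Measure ℝ) [IsFiniteMeasureOnCompacts m]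
    (hne : m ≠ 0) (h : IsInv G μm m) : Top' G (fun i => μm {i}) m = m := by
  have hfin : IsFiniteMeasureOnCompacts (Top' G (fun i => μm {i}) m) := by
    refine ⟨fun K hK => ?_⟩
    obtain ⟨n, hn⟩ : ∃ n : ℕ, m (Icc (-(n : ℝ)) n) ≠ 0 := by
      by_contra hc
      push Not at hc
      apply hne
      rw [← Measure.measure_univ_eq_zero]
      refine measure_mono_null ?_ (measure_iUnion_null hc)
      intro x _
      obtain ⟨n, hn⟩ := exists_nat_ge |x|
      exact mem_iUnion.2 ⟨n, abs_le.1 hn⟩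
    have hK' : IsCompact (K ∪ Icc (-(n : ℝ)) n) := hK.union isCompact_Icc
    obtain ⟨f, hf1, -, hfc, hf01⟩ := exists_continuous_one_zero_of_isCompact hK' isClosed_empty
      (disjoint_empty _)
    have hf0 : ∀ x, 0 ≤ f x := fun x => (hf01 x).1
    have hfi : ∀ i, Integrable (fun x => f (G i x)) m := fun i =>
      Continuous.integrable_of_hasCompactSupport (f.continuous.comp (hG i).cont)
        (isOPH_compactSupport (g := G i) (hG i) hfc)
    have hpos : 0 < ∫ x, f x ∂m := by
      rw [integral_pos_iff_support_of_nonneg hf0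
        (f.continuous.integrable_of_hasCompactSupport hfc)]
      refine lt_of_lt_of_le (pos_iff_ne_zero.2 hn) (measure_mono ?_)
      intro x hx
      have := hf1 (Or.inr hx)
      simp only [Function.mem_support]
      rw [this]; simp
    rw [h f f.continuous hfc] at hpos
    have hsum : Summable fun i => (μm {i}).toReal * ∫ x, f (G i x) ∂m := by
      by_contra hns
      rw [tsum_eq_zero_of_not_summable hns] at hpos
      exact lt_irrefl _ hpos
    have hmeas : Measurable fun x => ENNReal.ofReal (f x) :=
      f.continuous.measurable.ennreal_ofReal
    calc Top' G (fun i => μm {i}) m K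
        ≤ ∫⁻ x, ENNReal.ofReal (f x) ∂(Top' G (fun i => μm {i}) m) := by
          rw [← lintegral_indicator_one hK.measurableSet]
          refine lintegral_mono fun x => ?_
          by_cases hx : x ∈ K
          · have := hf1 (Or.inl hx)
            rw [this]; simp [hx]
          · simp [hx]
      _ = ∑' i, ENNReal.ofReal ((μm {i}).toReal * ∫ x, f (G i x) ∂m) := by
          rw [lintegral_Top' (fun i => (hG i).cont.measurable) _ _ hmeas]
          unfold Pop
          have hcm : ∀ i, Measurable fun x => ENNReal.ofReal (f (G i x)) :=
            fun i => hmeas.comp (hG i).cont.measurable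
          rw [lintegral_tsum fun i => ((hcm i).const_mul _).aemeasurable]
          refine tsum_congr fun i => ?_
          rw [lintegral_const_mul _ (hcm i), ENNReal.ofReal_mul ENNReal.toReal_nonneg, ENNReal.ofReal_toReal (measure_ne_top _ _),
            ofReal_integral_eq_lintegral_ofReal (hfi i) (ae_of_all _ fun x => hf0 _)]
      _ < ⊤ := by
          rw [← ENNReal.ofReal_tsum_of_nonneg _ hsum]
          · exact ENNReal.ofReal_lt_top
          · intro i
            exact mul_nonneg ENNReal.toReal_nonneg (integral_nonneg fun x => hf0 _)
  refine Measure.ext_of_integral_eq_on_compactlySupported fun f => ?_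
  exact (integral_Top' hG _ m (f := f) f.continuous f.hasCompactSupport).trans
    (h f f.continuous f.hasCompactSupport).symm

end Inv

section Gap

variable {ι : Type*}

/-- Contribution at time `n` of the excursions out of `A`. -/
noncomputable def exc (G : ι → ℝ → ℝ) (p : ι → ℝ≥0∞) (ν : Measure ℝ) (A : Set ℝ) :
    ℕ → Measure ℝ
  | 0 => ν.restrict A
  | n + 1 => (Top' G p (exc G p ν A n)).restrict Aᶜ

lemma exc_sum {G : ι → ℝ → ℝ} (hm : ∀ i, Measurable (G i)) (p : ι → ℝ≥0∞) (ν : Measure ℝ)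
    (A : Set ℝ) (N : ℕ) :
    ∑ n ∈ Finset.range (N + 1), exc G p ν A n =
      ν.restrict A + (Top' G p (∑ n ∈ Finset.range N, exc G p ν A n)).restrict Aᶜ := by
  induction N with
  | zero =>
    have h0 : Top' G p 0 = 0 := by
      ext E hE; rw [Top'_apply hm p _ hE]; simp
    simp [h0, exc]
  | succ N ih =>
    conv_lhs => rw [Finset.sum_range_succ, ih]
    conv_rhs => rw [Finset.sum_range_succ, Top'_add hm, Measure.restrict_add, ← add_assoc]
    rfl

lemma gap_bound {G : ι → ℝ → ℝ} [Countable ι] (hG : ∀ i, IsOPH (G i)) (p : ι → ℝ≥0∞)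
    (hp0 : ∀ i, p i ≠ 0) (hp1 : ∑' i, p i ≤ 1)
    {a' b' : ℝ} (hrec : ∀ x, ∑' k, (Pop G p)^[k] ((Icc a' b').indicator 1) x = ⊤)
    (ν : Measure ℝ) [IsFiniteMeasureOnCompacts ν] (hinv : Top' G p ν = ν)
    (herg : ∀ A : Set ℝ, MeasurableSet A → Top' G p (ν.restrict A) = ν.restrict A →
      ν A = 0 ∨ ν Aᶜ = 0)
    (M : Set ℝ) (hMinv : ∀ i, G i '' M ⊆ M) {a₀ b₀ : ℝ} (ha₀ : a₀ ∈ M) (hb₀ : b₀ ∈ M)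
    (hpos : ν (Ioo a₀ b₀) ≠ 0) (a b : ℝ) (hab : Disjoint (Ioo a b) M) :
    ν (Ioo a b) ≤ ν (Ioo a₀ b₀) := by
  have hm : ∀ i, Measurable (G i) := fun i => (hG i).cont.measurable
  have hfinI : ∀ u v : ℝ, ν (Icc u v) < ⊤ := fun u v => isCompact_Icc.measure_lt_top
  set A : Set ℝ := Ioo a₀ b₀ with hAdef
  have hA : MeasurableSet A := measurableSet_Ioo
  have hAfin : ν A ≠ ⊤ := ((measure_mono Ioo_subset_Icc_self).trans_lt (hfinI a₀ b₀)).ne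
  -- bounds for partial sums
  have hSle : ∀ N, ∑ n ∈ Finset.range N, exc G p ν A n ≤ ν := by
    intro N
    induction N with
    | zero => simpa using Measure.zero_le ν
    | succ N ih =>
      rw [exc_sum hm]
      calc _ ≤ ν.restrict A + ν.restrict Aᶜ := by
            refine add_le_add le_rfl (Measure.restrict_mono le_rfl ?_)
            exact (Top'_mono hm p ih).trans hinv.le
        _ = ν := Measure.restrict_add_restrict_compl hA
  have hSc : ∀ N (a b : ℝ), Disjoint (Ioo a b) M →
      (∑ n ∈ Finset.range N, exc G p ν A n) (Ioo a b) ≤ ν A := by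
    intro N
    induction N with
    | zero => intro a b _; simp
    | succ N ih =>
      intro a b hd
      rcases le_or_gt b a with hba | hlt
      · rw [Ioo_eq_empty (not_lt.2 hba)]; simp
      by_cases hsub : Ioo a b ⊆ A
      · exact (hSle (N + 1) _).trans (measure_mono hsub)
      · have hdisj : Disjoint (Ioo a b) A := by
          rw [Set.disjoint_left]
          intro x hx hxA
          apply hsub
          have h1 : a₀ ≤ a := by
            by_contra hc
            exact Set.disjoint_left.1 hd ⟨not_le.1 hc, hxA.1.trans hx.2⟩ ha₀
          have h2 : b ≤ b₀ := by
            by_contra hc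
            exact Set.disjoint_left.1 hd ⟨hx.1.trans hxA.2, not_le.1 hc⟩ hb₀
          exact Ioo_subset_Ioo h1 h2
        rw [exc_sum hm, Measure.add_apply, Measure.restrict_apply measurableSet_Ioo,
          hdisj.inter_eq, measure_empty, zero_add]
        refine (Measure.restrict_le_self _).trans ?_
        rw [Top'_apply hm p _ measurableSet_Ioo]
        calc _ ≤ ∑' i, p i * ν A := by
              refine ENNReal.tsum_le_tsum fun i => mul_le_mul_right ?_ _
              obtain ⟨u, hu⟩ := (hG i).2 a
              obtain ⟨v, hv⟩ := (hG i).2 b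
              have hpre : G i ⁻¹' Ioo a b = Ioo u v := by
                ext x
                rw [← hu, ← hv]
                simp only [mem_preimage, mem_Ioo, (hG i).1.lt_iff_lt]
              rw [hpre]
              refine ih u v ?_
              rw [← hpre, Set.disjoint_left]
              intro x hx hxM
              exact Set.disjoint_left.1 hd hx (hMinv i (mem_image_of_mem _ hxM))
          _ ≤ ν A := by
              rw [ENNReal.tsum_mul_right]
              exact (mul_le_mul_left hp1 _).trans (one_mul _).le
  -- the limit
  set Θ : Measure ℝ := Measure.sum (exc G p ν A) with hΘ
  have hΘE : ∀ E, MeasurableSet E →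
      Θ E = ⨆ N, (∑ n ∈ Finset.range N, exc G p ν A n) E := by
    intro E hE
    rw [hΘ, Measure.sum_apply _ hE, ENNReal.tsum_eq_iSup_nat]
    simp only [Measure.finsetSum_apply]
  have hΘν : Θ ≤ ν := by
    refine Measure.le_iff.2 fun E hE => ?_
    rw [hΘE E hE]
    exact iSup_le fun N => hSle N E
  have hsub : Top' G p Θ ≤ Θ := by
    refine Measure.le_iff.2 fun E hE => ?_
    rw [← measure_inter_add_sdiff E hA]
    have h1 : Top' G p Θ (E ∩ A) ≤ exc G p ν A 0 E := by
      calc Top' G p Θ (E ∩ A) ≤ Top' G p ν (E ∩ A) := Top'_mono hm p hΘν _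
        _ = exc G p ν A 0 E := by
          rw [hinv]; exact (Measure.restrict_apply hE).symm
    have h2 : Top' G p Θ (E \ A) = ∑' n, exc G p ν A (n + 1) E := by
      rw [hΘ, Top'_sum hm, Measure.sum_apply _ (hE.diff hA)]
      refine tsum_congr fun n => ?_
      rw [exc, Measure.restrict_apply hE]; rfl
    have h3 : Θ E = exc G p ν A 0 E + ∑' n, exc G p ν A (n + 1) E := by
      rw [hΘ, Measure.sum_apply _ hE, tsum_eq_zero_add' ENNReal.summable]
    rw [h2, h3]
    exact add_le_add h1 le_rfl
  have hsfΘ : SigmaFinite Θ := sigmaFinite_of_le' hΘν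
  have hΘinv : Top' G p Θ = Θ :=
    conserv hm p measurableSet_Icc hrec Θ ((hΘν _).trans_lt (hfinI _ _)) hsub
  obtain ⟨d, hd⟩ := exists_add_of_le' hΘν
  have hdν : d ≤ ν := by rw [hd]; exact Measure.le_add_left le_rfl
  have hsfd : SigmaFinite d := sigmaFinite_of_le' hdν
  have hdw : ν.withDensity (d.rnDeriv ν) = d :=
    Measure.withDensity_rnDeriv_eq d ν (Measure.absolutelyContinuous_of_le hdν)
  have hhm : Measurable (d.rnDeriv ν) := Measure.measurable_rnDeriv d ν
  set h := d.rnDeriv ν with hh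
  set B : Set ℝ := {x | h x ≠ 0} with hB
  have hBm : MeasurableSet B := hhm (measurableSet_singleton 0).compl
  have hdz : ∀ s, d s = 0 ↔ ν (B ∩ s) = 0 := by
    intro s
    conv_lhs => rw [← hdw]
    exact withDensity_apply_eq_zero' hhm.aemeasurable
  have hdB : d Bᶜ = 0 := by rw [hdz]; simp
  have hTd : Top' G p d Bᶜ = 0 := by
    have hcov : Bᶜ ⊆ ⋃ k : ℕ, Bᶜ ∩ Icc (-(k : ℝ)) k := by
      intro x hx
      obtain ⟨n, hn⟩ := exists_nat_ge |x|
      exact mem_iUnion.2 ⟨n, hx, abs_le.1 hn⟩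
    refine measure_mono_null hcov (measure_iUnion_null fun k => ?_)
    set C : Set ℝ := Bᶜ ∩ Icc (-(k : ℝ)) k
    have hνC : ν C ≠ ⊤ := ((measure_mono inter_subset_right).trans_lt (hfinI _ _)).ne
    have hdC : d C = 0 := measure_mono_null inter_subset_left hdB
    have e1 : ν C = Θ C + d C := by conv_lhs => rw [hd, Measure.add_apply]
    have e2 : ν C = Θ C + Top' G p d C := by
      conv_lhs => rw [← hinv, hd, Top'_add hm, hΘinv, Measure.add_apply]
    rw [hdC, add_zero] at e1
    rw [e1] at e2 hνC
    have e3 : Θ C + 0 = Θ C + Top' G p d C := by rw [add_zero]; exact e2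
    exact ((ENNReal.add_right_inj hνC).1 e3).symm
  have habs : ∀ i, ν (B ∩ G i ⁻¹' Bᶜ) = 0 := by
    intro i
    rw [← hdz]
    rw [Top'_apply hm p _ hBm.compl, ENNReal.tsum_eq_zero] at hTd
    exact (mul_eq_zero.1 (hTd i)).resolve_left (hp0 i)
  have hdA : ν (B ∩ A) = 0 := by
    rw [← hdz]
    have e1 : ν A = Θ A + d A := by conv_lhs => rw [hd, Measure.add_apply]
    have e2 : ν A ≤ Θ A := by
      rw [hΘ, Measure.sum_apply _ hA]
      refine le_trans ?_ (ENNReal.le_tsum 0)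
      rw [exc, Measure.restrict_apply hA, inter_self]
    have e3 : Θ A = ν A := le_antisymm (hΘν A) e2
    rw [e3] at e1
    have e4 : ν A + 0 = ν A + d A := by rw [add_zero]; exact e1
    exact ((ENNReal.add_right_inj hAfin).1 e4).symm
  have hB0 : ν B = 0 := by
    rcases herg B hBm (restrict_inv hm p measurableSet_Icc hrec ν (hfinI _ _) hinv hBm habs)
      with h | h
    · exact h
    · exfalso
      apply hpos
      refine measure_mono_null ?_ (measure_union_null hdA h)
      intro x hx
      by_cases hxB : x ∈ B
      · exact Or.inl ⟨hxB, hx⟩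
      · exact Or.inr hxB
  have hd0 : d = 0 := by
    rw [← Measure.measure_univ_eq_zero, hdz, inter_univ]; exact hB0
  rw [hd0, add_zero] at hd
  rw [hd, hΘE _ measurableSet_Ioo, ← hd]
  exact iSup_le fun N => hSc N a b hab

end Gap

/-- **Theorem.** Under conditions (R) and (U), the support of every ergodic invariant
Radon measure `ν` is either minimal among nonempty closed `Γ`-invariant sets, or it
contains a nonempty `Γ`-invariant set all of whose points are isolated. -/
theorem support_minimal_or_contains_discrete
    {ι : Type*} [Countable ι] [MeasurableSpace ι]
    (G : ι → ℝ → ℝ) (hG : ∀ i, IsOPH (G i))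
    (μm : Measure ι) [IsProbabilityMeasure μm] (hpos : ∀ i, 0 < μm {i})
    (Q : Measure (ℕ → ι)) (hQ : IsProd μm Q)
    (hR : CondR G Q) (hU : CondU G)
    (ν : Measure ℝ) (hrad : IsRadon ν) (herg : IsErg G μm ν) :
    (∀ M : Set ℝ, M ⊆ msupp ν → M.Nonempty → IsClosed M →
        (∀ i, G i '' M ⊆ M) → M = msupp ν) ∨
    (∃ M : Set ℝ, M ⊆ msupp ν ∧ M.Nonempty ∧ (∀ i, G i '' M ⊆ M) ∧
        ∀ x ∈ M, ∃ U : Set ℝ, IsOpen U ∧ x ∈ U ∧ U ∩ M = {x}) := by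
  classical
  by_cases hν : ν = 0
  · left
    intro M hM hne _ _
    obtain ⟨x, hx⟩ := hne
    have := hM hx univ isOpen_univ trivial
    rw [hν] at this
    simp at this
  have hfc : IsFiniteMeasureOnCompacts ν := ⟨fun K hK => hrad K hK⟩
  have hm : ∀ i, Measurable (G i) := fun i => (hG i).cont.measurable
  have hfinI : ∀ u v : ℝ, ν (Icc u v) < ⊤ := fun u v => isCompact_Icc.measure_lt_top
  have hinv : Top' G (fun i => μm {i}) ν = ν := Top'_of_isInv hG μm ν hν herg.1
  obtain ⟨a', b', -, hR⟩ := hR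
  obtain ⟨i₀, -⟩ := hU 0
  have hQ0 : Q univ ≠ 0 := by
    have := hQ 0 (fun _ => i₀)
    simp only [not_lt_zero, false_imp_iff, implies_true, Finset.range_zero,
      Finset.prod_empty] at this
    have h2 : Q univ = 1 := this
    rw [h2]; simp
  obtain ⟨s, hs, hs1⟩ := exists_transversal μm Q hQ0
  have hrec := rec_of_condR G μm Q hQ s hs hR
  have hqle : Top' G (fun i => if i ∈ s then μm {i} else 0) ν ≤ ν := by
    conv_rhs => rw [← hinv]
    refine Measure.le_iff.2 fun E hE => ?_
    rw [Top'_apply hm _ _ hE, Top'_apply hm _ _ hE]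
    refine ENNReal.tsum_le_tsum fun i => mul_le_mul_left ?_ _
    split_ifs <;> simp
  have hqinv := conserv hm _ measurableSet_Icc hrec ν (hfinI _ _) hqle
  have hsu : s = univ := by
    rw [eq_univ_iff_forall]
    intro i
    by_contra hi
    apply hν
    rw [← Measure.measure_univ_eq_zero]
    have hk : ∀ k : ℕ, ν (G i ⁻¹' Icc (-(k : ℝ)) k) = 0 := by
      intro k
      by_contra hne
      have e1 := Top'_apply hm (fun i => μm {i}) ν (measurableSet_Icc (a := -(k : ℝ)) (b := k))
      have e2 := Top'_apply hm (fun i => if i ∈ s then μm {i} else 0) ν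
        (measurableSet_Icc (a := -(k : ℝ)) (b := k))
      rw [hinv] at e1
      rw [hqinv] at e2
      have := ENNReal.tsum_lt_tsum (i := i)
        (f := fun i => (if i ∈ s then μm {i} else 0) * ν (G i ⁻¹' Icc (-(k : ℝ)) k))
        (g := fun i => μm {i} * ν (G i ⁻¹' Icc (-(k : ℝ)) k))
        (by rw [← e2]; exact (hfinI _ _).ne)
        (fun j => mul_le_mul_left (by split_ifs <;> simp) _)
        (by simp only [hi, if_false, zero_mul]
            exact pos_iff_ne_zero.2 (mul_ne_zero (hpos i).ne' hne))
      rw [← e1, ← e2] at this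
      exact lt_irrefl _ this
    refine measure_mono_null ?_ (measure_iUnion_null hk)
    intro x _
    obtain ⟨n, hn⟩ := exists_nat_ge |G i x|
    exact mem_iUnion.2 ⟨n, abs_le.1 hn⟩
  subst hsu
  simp only [mem_univ, if_true] at hrec
  have hp1 : ∑' i, μm {i} ≤ 1 := by
    rw [tsum_univ (f := fun i => μm {i})] at hs1
    exact hs1
  have herg' : ∀ A : Set ℝ, MeasurableSet A →
      Top' G (fun i => μm {i}) (ν.restrict A) = ν.restrict A → ν A = 0 ∨ ν Aᶜ = 0 := by
    intro A hA h
    have : IsFiniteMeasureOnCompacts (ν.restrict A) :=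
      ⟨fun K hK => (Measure.restrict_le_self K).trans_lt (hrad K hK)⟩
    exact herg.2 A hA (isInv_of_Top' hG μm _ h)
  rw [or_iff_not_imp_left]
  intro hnot
  push Not at hnot
  obtain ⟨M, hMS, hMne, hMc, hMinv, hMneq⟩ := hnot
  refine ⟨M, hMS, hMne, hMinv, ?_⟩
  have hgm : ∀ i x, x ∈ M → G i x ∈ M := fun i x hx => hMinv i (mem_image_of_mem _ hx)
  have hMpos : ν Mᶜ ≠ 0 := by
    obtain ⟨x, hx, hxM⟩ : ∃ x ∈ msupp ν, x ∉ M := by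
      by_contra hc
      push Not at hc
      exact hMneq (hMS.antisymm hc)
    exact (hx Mᶜ hMc.isOpen_compl hxM).ne'
  have hM0 : ν M = 0 := by
    refine (herg' M hMc.measurableSet ?_).resolve_right hMpos
    refine restrict_inv hm _ measurableSet_Icc hrec ν (hfinI _ _) hinv hMc.measurableSet ?_
    intro i
    have : M ∩ G i ⁻¹' Mᶜ = ∅ := by
      ext x
      simp only [mem_inter_iff, mem_preimage, mem_compl_iff, mem_empty_iff_false, iff_false]
      rintro ⟨h1, h2⟩
      exact h2 (hgm i x h1)
    rw [this, measure_empty]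
  have hbelow : ∀ t, ∃ y ∈ M, y ≤ t := by
    intro t
    by_contra hc
    push Not at hc
    have hb : BddBelow M := ⟨t, fun y hy => (hc y hy).le⟩
    obtain ⟨i, -, h, -⟩ := hU (sInf M)
    exact absurd (csInf_le hb (hgm i _ (hMc.csInf_mem hMne hb))) (not_le.2 h)
  have habove : ∀ t, ∃ y ∈ M, t ≤ y := by
    intro t
    by_contra hc
    push Not at hc
    have hb : BddAbove M := ⟨t, fun y hy => (hc y hy).le⟩
    obtain ⟨-, j, -, h⟩ := hU (sSup M)
    exact absurd (le_csSup hb (hgm j _ (hMc.csSup_mem hMne hb))) (not_le.2 h)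
  have hgap : ∀ t, t ∉ M → ∃ a ∈ M, ∃ b ∈ M, a < t ∧ t < b ∧ Disjoint (Ioo a b) M := by
    intro t ht
    obtain ⟨y, hy, hyt⟩ := hbelow t
    obtain ⟨z, hz, hzt⟩ := habove t
    have hba : BddAbove (M ∩ Iic t) := ⟨t, fun y hy => hy.2⟩
    have hbb : BddBelow (M ∩ Ici t) := ⟨t, fun y hy => hy.2⟩
    have h1 := (hMc.inter isClosed_Iic).csSup_mem ⟨y, hy, hyt⟩ hba
    have h2 := (hMc.inter isClosed_Ici).csInf_mem ⟨z, hz, hzt⟩ hbb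
    refine ⟨_, h1.1, _, h2.1, lt_of_le_of_ne h1.2 ?_, lt_of_le_of_ne h2.2 ?_, ?_⟩
    · intro h; rw [h] at h1; exact ht h1.1
    · intro h; rw [← h] at h2; exact ht h2.1
    · rw [Set.disjoint_left]
      intro x hx hxM
      rcases le_total x t with h | h
      · exact absurd (le_csSup hba ⟨hxM, h⟩) (not_le.2 hx.1)
      · exact absurd (csInf_le hbb ⟨hxM, h⟩) (not_le.2 hx.2)
  have hposgap : ∀ V : Set ℝ, ν (V \ M) ≠ 0 → ∃ t ∈ V, ∃ a ∈ M, ∃ b ∈ M, a < t ∧ t < b ∧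
      Disjoint (Ioo a b) M ∧ ν (Ioo a b) ≠ 0 := by
    intro V hV
    by_contra hc
    push Not at hc
    apply hV
    refine measure_null_of_locally_null _ fun x hx => ?_
    obtain ⟨a, ha, b, hb, hax, hxb, hd⟩ := hgap x hx.2
    exact ⟨Ioo a b, mem_nhdsWithin_of_mem_nhds (Ioo_mem_nhds hax hxb),
      hc x hx.1 a ha b hb hax hxb hd⟩
  obtain ⟨-, -, a₀, ha₀, b₀, hb₀, -, -, hd₀, hν₀⟩ := hposgap univ
    (by rwa [← compl_eq_univ_sdiff])
  have hclaim : ∀ u ∈ M, ∀ v ∈ M, (Ioo u v ∩ M).Nonempty → ν (Ioo a₀ b₀) ≤ ν (Ioo u v) := by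
    rintro u hu v hv ⟨y, hy, hyM⟩
    have h1 : ν (Ioo u v \ M) ≠ 0 := by
      rw [measure_sdiff_null hM0]
      exact (hMS hyM (Ioo u v) isOpen_Ioo hy).ne'
    obtain ⟨t, ht, a, ha, b, hb, hat, htb, hd, hne⟩ := hposgap _ h1
    have hua : u ≤ a := by
      by_contra hc
      exact Set.disjoint_left.1 hd ⟨not_le.1 hc, ht.1.trans htb⟩ hu
    have hbv : b ≤ v := by
      by_contra hc
      exact Set.disjoint_left.1 hd ⟨hat.trans ht.2, not_le.1 hc⟩ hv
    refine le_trans ?_ (measure_mono (Ioo_subset_Ioo hua hbv))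
    exact gap_bound hG _ (fun i => (hpos i).ne') hp1 hrec ν hinv herg' M hMinv ha hb hne a₀ b₀ hd₀
  intro x hx
  -- small punctured neighbourhoods
  obtain ⟨δ, hδ, hsmall⟩ : ∃ δ > 0, ν (Ioo (x - δ) (x + δ) \ {x}) < ν (Ioo a₀ b₀) := by
    have hlim := tendsto_measure_iInter_atTop (μ := ν)
      (s := fun n : ℕ => Ioo (x - 1 / ((n : ℝ) + 1)) (x + 1 / ((n : ℝ) + 1)) \ {x})
      (fun n => (measurableSet_Ioo.diff (measurableSet_singleton x)).nullMeasurableSet)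
      (by
        intro n k hnk
        have : 1 / ((k : ℝ) + 1) ≤ 1 / ((n : ℝ) + 1) := Nat.one_div_le_one_div hnk
        exact sdiff_subset_sdiff_left (Ioo_subset_Ioo (by linarith) (by linarith)))
      ⟨0, ((measure_mono (sdiff_subset.trans Ioo_subset_Icc_self)).trans_lt (hfinI _ _)).ne⟩
    have hemp : (⋂ n : ℕ, Ioo (x - 1 / ((n : ℝ) + 1)) (x + 1 / ((n : ℝ) + 1)) \ {x}) = ∅ := by
      ext y
      simp only [mem_iInter, mem_empty_iff_false, iff_false, not_forall]
      by_cases hyx : y = x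
      · exact ⟨0, fun h => h.2 hyx⟩
      · obtain ⟨n, hn⟩ := exists_nat_one_div_lt (abs_pos.2 (sub_ne_zero.2 hyx))
        refine ⟨n, fun h => ?_⟩
        have h3 : |y - x| < 1 / ((n : ℝ) + 1) :=
          abs_lt.2 ⟨by linarith [h.1.1], by linarith [h.1.2]⟩
        exact lt_irrefl _ (h3.trans hn)
    rw [hemp, measure_empty] at hlim
    obtain ⟨n, hn⟩ := (hlim.eventually (gt_mem_nhds (pos_iff_ne_zero.2 hν₀))).exists
    exact ⟨1 / ((n : ℝ) + 1), Nat.one_div_pos_of_nat, hn⟩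
  have hright : ∃ e, x < e ∧ Disjoint (Ioo x e) M := by
    by_cases h : Disjoint (Ioo x (x + δ)) M
    · exact ⟨_, by linarith, h⟩
    · obtain ⟨y, hy, hyM⟩ := Set.not_disjoint_iff.1 h
      refine ⟨y, hy.1, ?_⟩
      by_contra hc
      obtain ⟨z, hz, hzM⟩ := Set.not_disjoint_iff.1 hc
      refine absurd (hclaim x hx y hyM ⟨z, hz, hzM⟩) (not_le.2 (lt_of_le_of_lt ?_ hsmall))
      refine measure_mono fun w hw => ⟨⟨by linarith [hw.1], by linarith [hw.2, hy.2]⟩, ?_⟩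
      exact hw.1.ne'
  have hleft : ∃ e, e < x ∧ Disjoint (Ioo e x) M := by
    by_cases h : Disjoint (Ioo (x - δ) x) M
    · exact ⟨_, by linarith, h⟩
    · obtain ⟨y, hy, hyM⟩ := Set.not_disjoint_iff.1 h
      refine ⟨y, hy.2, ?_⟩
      by_contra hc
      obtain ⟨z, hz, hzM⟩ := Set.not_disjoint_iff.1 hc
      refine absurd (hclaim y hyM x hx ⟨z, hz, hzM⟩) (not_le.2 (lt_of_le_of_lt ?_ hsmall))
      refine measure_mono fun w hw => ⟨⟨by linarith [hw.1, hy.1], by linarith [hw.2]⟩, ?_⟩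
      exact hw.2.ne
  obtain ⟨e, he, hde⟩ := hright
  obtain ⟨f, hf, hdf⟩ := hleft
  refine ⟨Ioo f e, isOpen_Ioo, ⟨hf, he⟩, ?_⟩
  ext y
  simp only [mem_inter_iff, mem_singleton_iff]
  constructor
  · rintro ⟨hy, hyM⟩
    rcases lt_trichotomy y x with h | h | h
    · exact absurd hyM (Set.disjoint_left.1 hdf ⟨hy.1, h⟩)
    · exact h
    · exact absurd hyM (Set.disjoint_left.1 hde ⟨h, hy.2⟩)
  · rintro rfl
    exact ⟨⟨hf, he⟩, hx⟩
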